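/- Let X be a real Banach space and B₁, B₂ ⊂ X nonempty bounded subsets such that the Minkowski sum B₁ + B₂ is SCD. Then B₁ is SCD (and, by symmetry, so is B₂). -/

import Mathlib

open Bornology Set Pointwise

variable {X : Type*} [NormedAddCommGroup X] [NormedSpace ℝ X]

/-- The sliceSet of `A` given by the functional `f` and `ε > 0`. -/
noncomputable def sliceSet (A : Set X) (f : X →L[ℝ] ℝ) (ε : ℝ) : Set X :=
  {x ∈ A | sSup (f '' A) - ε < f x}

/-- `S` is a sliceSet of `A`: a nonempty set of the form `sliceSet A f ε` with `f ≠ 0`, `ε > 0`. -/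
def IsSlice (A S : Set X) : Prop :=
  S.Nonempty ∧ ∃ f : X →L[ℝ] ℝ, f ≠ 0 ∧ ∃ ε : ℝ, 0 < ε ∧ S = sliceSet A f ε

/-- A sequence of subsets of `A` is determining if every set `B` meeting all of them
has `A` inside the closed convex hull of `B`. -/
def Determining (A : Set X) (V : ℕ → Set X) : Prop :=
  ∀ B : Set X, (∀ n, (B ∩ V n).Nonempty) → A ⊆ closure (convexHull ℝ B)

/-- A bounded set is slicely countably determined if it has a determining sequence of slices. -/
def IsSCD (A : Set X) : Prop :=
  ∃ V : ℕ → Set X, (∀ n, IsSlice A (V n)) ∧ Determining A V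

/-- The Daugavet property: every rank-one operator `x ↦ f x • y` satisfies the
Daugavet equation `‖Id + T‖ = 1 + ‖T‖`. -/
def DaugavetProperty (X : Type*) [NormedAddCommGroup X] [NormedSpace ℝ X] : Prop :=
  ∀ (f : X →L[ℝ] ℝ) (y : X),
    ‖ContinuousLinearMap.id ℝ X + f.smulRight y‖ = 1 + ‖f.smulRight y‖

/-!
For each slice `S(B₁ + B₂, f, ε)` of a determining sequence take the slice `S(B₁, f, ε / 2)`. If `C`
meets all of the latter, then `C + B₂` meets all of the former, because
`S(B₁, f, ε / 2) + S(B₂, f, ε / 2) ⊆ S(B₁ + B₂, f, ε)`. Hence `B₁ + B₂` lies in the closed convex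
hull of `C + B₂`, and the bounded summand `B₂` cancels by Hahn–Banach separation.
-/

section Cancellation

variable {E : Type*} [AddCommGroup E] [Module ℝ E] [TopologicalSpace E]

theorem bddAbove_image_of_isVonNBounded {B : Set E} (hB : IsVonNBounded ℝ B) (f : E →L[ℝ] ℝ) :
    BddAbove (f '' B) :=
  ((NormedSpace.isVonNBounded_iff ℝ).1 (hB.image f)).bddAbove

theorem map_le_of_mem_closedConvexHull {s : Set E} {x : E} (f : E →L[ℝ] ℝ) {c : ℝ}
    (hs : ∀ y ∈ s, f y ≤ c) (hx : x ∈ closedConvexHull ℝ s) : f x ≤ c :=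
  closedConvexHull_min hs (convex_halfSpace_le f.toLinearMap.isLinear c)
    (isClosed_le f.continuous continuous_const) hx

theorem subset_closedConvexHull_of_add_subset_closedConvexHull_add
    [IsTopologicalAddGroup E] [ContinuousSMul ℝ E] [LocallyConvexSpace ℝ E] {A B C : Set E}
    (hB : B.Nonempty) (hBb : IsVonNBounded ℝ B) (h : A + B ⊆ closedConvexHull ℝ (C + B)) :
    A ⊆ closedConvexHull ℝ C := by
  intro a ha
  by_contra haC
  obtain ⟨f, u, hfC, hfa⟩ := geometric_hahn_banach_closed_point
    convex_closedConvexHull isClosed_closedConvexHull haC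
  have hf_add : ∀ z ∈ C + B, f z ≤ u + sSup (f '' B) := by
    rintro _ ⟨c, hc, b, hb, rfl⟩
    rw [map_add]
    exact add_le_add (hfC c (subset_closedConvexHull hc)).le
      (le_csSup (bddAbove_image_of_isVonNBounded hBb f) (mem_image_of_mem f hb))
  have hsSup_le : sSup (f '' B) ≤ u + sSup (f '' B) - f a := by
    refine csSup_le (hB.image f) (forall_mem_image.2 fun b hb => ?_)
    have hfab := map_le_of_mem_closedConvexHull f hf_add (h (add_mem_add ha hb))
    rw [map_add] at hfab
    linarith
  linarith

end Cancellation

theorem sliceSet_subset (A : Set X) (f : X →L[ℝ] ℝ) (ε : ℝ) : sliceSet A f ε ⊆ A :=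
  sep_subset _ _

theorem sliceSet_nonempty {A : Set X} (hA : A.Nonempty) (f : X →L[ℝ] ℝ) {ε : ℝ} (hε : 0 < ε) :
    (sliceSet A f ε).Nonempty := by
  obtain ⟨_, ⟨x, hx, rfl⟩, hlt⟩ := exists_lt_of_lt_csSup (hA.image f) (sub_lt_self _ hε)
  exact ⟨x, hx, hlt⟩

theorem sliceSet_add_sliceSet_subset {A B : Set X} {f : X →L[ℝ] ℝ} (hA : BddAbove (f '' A))
    (hB : BddAbove (f '' B)) (ε δ : ℝ) :
    sliceSet A f ε + sliceSet B f δ ⊆ sliceSet (A + B) f (ε + δ) := by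
  rintro _ ⟨x, ⟨hxA, hx⟩, y, ⟨hyB, hy⟩, rfl⟩
  have hsSup : sSup (f '' (A + B)) = sSup (f '' A) + sSup (f '' B) := by
    rw [image_add, csSup_add ⟨f x, mem_image_of_mem f hxA⟩ hA ⟨f y, mem_image_of_mem f hyB⟩ hB]
  refine ⟨add_mem_add hxA hyB, ?_⟩
  rw [hsSup, map_add]
  linarith

theorem Determining.of_add {A B : Set X} {U V W : ℕ → Set X} (hV : Determining (A + B) V)
    (hB : IsBounded B) (hWB : ∀ n, W n ⊆ B) (hW : ∀ n, (W n).Nonempty)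
    (hUW : ∀ n, U n + W n ⊆ V n) : Determining A U := by
  intro C hC
  have hmeets : ∀ n, ((C + B) ∩ V n).Nonempty := fun n => by
    obtain ⟨c, hcC, hcU⟩ := hC n
    obtain ⟨w, hw⟩ := hW n
    exact ⟨c + w, add_mem_add hcC (hWB n hw), hUW n (add_mem_add hcU hw)⟩
  have hsub := hV (C + B) hmeets
  rw [← closedConvexHull_eq_closure_convexHull] at hsub ⊢
  exact subset_closedConvexHull_of_add_subset_closedConvexHull_add ((hW 0).mono (hWB 0))
    ((NormedSpace.isVonNBounded_iff ℝ).2 hB) hsub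

theorem IsSCD.nonempty {A : Set X} (hA : IsSCD A) : A.Nonempty := by
  obtain ⟨V, hV, -⟩ := hA
  obtain ⟨hne, f, -, ε, -, hVε⟩ := hV 0
  exact (hVε ▸ hne).mono (sliceSet_subset A f ε)

theorem IsSCD.of_add_left {A B : Set X} (hAB : IsSCD (A + B)) (hA : IsBounded A)
    (hB : IsBounded B) : IsSCD A := by
  obtain ⟨hAne, hBne⟩ := add_nonempty.1 hAB.nonempty
  obtain ⟨V, hV, hdet⟩ := hAB
  choose _ f hf ε hε hVε using hV
  have hbdd {D : Set X} (hD : IsBounded D) (n : ℕ) : BddAbove (f n '' D) :=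
    bddAbove_image_of_isVonNBounded ((NormedSpace.isVonNBounded_iff ℝ).2 hD) (f n)
  refine ⟨fun n => sliceSet A (f n) (ε n / 2), fun n =>
    ⟨sliceSet_nonempty hAne _ (half_pos (hε n)), f n, hf n, ε n / 2, half_pos (hε n), rfl⟩,
    hdet.of_add hB (W := fun n => sliceSet B (f n) (ε n / 2)) (fun n => sliceSet_subset B _ _)
      (fun n => sliceSet_nonempty hBne _ (half_pos (hε n))) fun n => ?_⟩
  rw [hVε n]
  simpa only [add_halves] using
    sliceSet_add_sliceSet_subset (hbdd hA n) (hbdd hB n) (ε n / 2) (ε n / 2)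

theorem isSCD_of_sum_isSCD_general {B₁ B₂ : Set X} (h₁b : IsBounded B₁) (h₂b : IsBounded B₂)
    (hsum : IsSCD (B₁ + B₂)) : IsSCD B₁ ∧ IsSCD B₂ :=
  ⟨hsum.of_add_left h₁b h₂b, (add_comm B₁ B₂ ▸ hsum).of_add_left h₂b h₁b⟩

theorem isSCD_of_sum_isSCD
    {X : Type*} [NormedAddCommGroup X] [NormedSpace ℝ X] [CompleteSpace X]
    (B₁ B₂ : Set X) (h₁ : B₁.Nonempty) (h₁b : IsBounded B₁)
    (h₂ : B₂.Nonempty) (h₂b : IsBounded B₂)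
    (hsum : IsSCD (B₁ + B₂)) :
    IsSCD B₁ ∧ IsSCD B₂ :=
  isSCD_of_sum_isSCD_general h₁b h₂b hsum
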